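/- arXiv:1209.4347 — 4 statements merged into one kernel-verified Lean document; each statement's English description precedes it below -/
import Mathlib

section
/- The Hodge dual 4-form ψ of the standard G₂ 3-form φ on ℝ^7 satisfies the contraction identity ψ_{abcd} ψ^{mnpq} = 24 δ_a^{[m} δ_b^{n} δ_c^{p} δ_d^{q]} + 72 ψ_{[ab}{}^{[mn} δ_c^{p} δ_{d]}^{q]} − 16 φ_{[abc} φ^{[mnp} δ_{d]}^{q]} for all indices a, b, c, d, m, n, p, q, where square brackets denote separate antisymmetrization over the lower index group a, b, c, d and over the upper index group m, n, p, q. -/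
open scoped BigOperators

/-- Components of the standard G₂ 3-form `φ` on the seven ordered (0-indexed) index
triples corresponding to `φ₁₂₃ = φ₁₄₅ = φ₁₆₇ = φ₂₄₆ = 1`, `φ₂₅₇ = φ₃₄₇ = φ₃₅₆ = -1`. -/
def phi0 : ℕ → ℕ → ℕ → ℝ
  | 0, 1, 2 => 1
  | 0, 3, 4 => 1
  | 0, 5, 6 => 1
  | 1, 3, 5 => 1
  | 1, 4, 6 => -1
  | 2, 3, 6 => -1
  | 2, 4, 5 => -1
  | _, _, _ => 0

/-- The standard G₂ 3-form `φ` on `ℝ⁷`, as a totally antisymmetric 3-tensor. -/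
def phi (a b c : Fin 7) : ℝ :=
  phi0 a.val b.val c.val - phi0 a.val c.val b.val + phi0 b.val c.val a.val
    - phi0 b.val a.val c.val + phi0 c.val a.val b.val - phi0 c.val b.val a.val

/-- The Levi-Civita symbol on seven indices, with `ε 1234567 = 1`. -/
noncomputable def eps (v : Fin 7 → Fin 7) : ℝ :=
  if h : Function.Bijective v then ((Equiv.Perm.sign (Equiv.ofBijective v h) : ℤ) : ℝ) else 0

/-- The 4-form `ψ = ⋆φ`, `ψ_{abcd} = (1/6) ε_{abcdmnp} φ^{mnp}`. -/
noncomputable def psi (a b c d : Fin 7) : ℝ :=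
  (1 / 6 : ℝ) * ∑ m : Fin 7, ∑ n : Fin 7, ∑ p : Fin 7,
    eps ![a, b, c, d, m, n, p] * phi m n p

/-- The Euclidean metric `g_{ab} = δ_{ab}` on `ℝ⁷`. -/
def gE (a b : Fin 7) : ℝ := if a = b then 1 else 0

/-- Antisymmetrization of a 4-tensor over its four indices. -/
noncomputable def alt4 (T : Fin 7 → Fin 7 → Fin 7 → Fin 7 → ℝ) (a b c d : Fin 7) : ℝ :=
  (1 / 24 : ℝ) * ∑ σ : Equiv.Perm (Fin 4),
    ((Equiv.Perm.sign σ : ℤ) : ℝ) *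
      T (![a, b, c, d] (σ 0)) (![a, b, c, d] (σ 1)) (![a, b, c, d] (σ 2)) (![a, b, c, d] (σ 3))

lemma perm_list : (Finset.univ : Finset (Equiv.Perm (Fin 4))).val.map
    (fun σ => (((Equiv.Perm.sign σ : ℤ), σ 0, σ 1, σ 2, σ 3) : ℤ × Fin 4 × Fin 4 × Fin 4 × Fin 4)) =
    (([(1, 0, 1, 2, 3), (-1, 0, 1, 3, 2), (-1, 0, 2, 1, 3), (1, 0, 2, 3, 1), (1, 0, 3, 1, 2), (-1, 0, 3, 2, 1), (-1, 1, 0, 2, 3), (1, 1, 0, 3, 2), (1, 1, 2, 0, 3), (-1, 1, 2, 3, 0), (-1, 1, 3, 0, 2), (1, 1, 3, 2, 0), (1, 2, 0, 1, 3), (-1, 2, 0, 3, 1), (-1, 2, 1, 0, 3), (1, 2, 1, 3, 0), (1, 2, 3, 0, 1), (-1, 2, 3, 1, 0), (-1, 3, 0, 1, 2), (1, 3, 0, 2, 1), (1, 3, 1, 0, 2), (-1, 3, 1, 2, 0), (-1, 3, 2, 0, 1), (1, 3, 2, 1, 0)] : List (ℤ × Fin 4 × Fin 4 × Fin 4 ×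 Fin 4)) : Multiset _) := by
  decide +kernel

lemma alt4_expand (T : Fin 7 → Fin 7 → Fin 7 → Fin 7 → ℝ) (a b c d : Fin 7) :
    alt4 T a b c d = (1/24) * (
      T a b c d - T a b d c - T a c b d + T a c d b + T a d b c - T a d c b
      - T b a c d + T b a d c + T b c a d - T b c d a - T b d a c + T b d c a
      + T c a b d - T c a d b - T c b a d + T c b d a + T c d a b - T c d b a
      - T d a b c + T d a c b + T d b a c - T d b c a - T d c a b + T d c b a) := by
  have h := congrArg (fun M => (M.map (fun x : ℤ × Fin 4 × Fin 4 × Fin 4 × Fin 4 =>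
    (x.1 : ℝ) * T (![a, b, c, d] x.2.1) (![a, b, c, d] x.2.2.1) (![a, b, c, d] x.2.2.2.1)
      (![a, b, c, d] x.2.2.2.2))).sum) perm_list
  simp only [Multiset.map_map, Function.comp_def] at h
  unfold alt4
  congr 1
  refine Eq.trans h ?_
  simp only [Multiset.map_coe, Multiset.sum_coe, List.map_cons, List.map_nil, List.sum_cons,
    List.sum_nil]
  simp
  ring

lemma eps_comp (v : Fin 7 → Fin 7) (σ : Equiv.Perm (Fin 7)) :
    eps (v ∘ σ) = ((Equiv.Perm.sign σ : ℤ) : ℝ) * eps v := by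
  unfold eps
  by_cases h : Function.Bijective v
  · have h2 : Function.Bijective (v ∘ σ) := h.comp σ.bijective
    rw [dif_pos h, dif_pos h2]
    have : Equiv.ofBijective (v ∘ σ) h2 = Equiv.ofBijective v h * σ := by ext; rfl
    rw [this, Equiv.Perm.sign_mul]; push_cast; ring
  · have h2 : ¬ Function.Bijective (v ∘ σ) := fun h' => h (by
      have := h'.comp σ.symm.bijective
      simpa [Function.comp_assoc] using this)
    rw [dif_neg h, dif_neg h2, mul_zero]

lemma eps_swap (v w : Fin 7 → Fin 7) (i j : Fin 7) (hij : i ≠ j) (h : w = v ∘ Equiv.swap i j) :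
    eps w = - eps v := by
  rw [h, eps_comp, Equiv.Perm.sign_swap hij]; simp

lemma eps_s0 (a b c d m n p : Fin 7) : eps ![b,a,c,d,m,n,p] = - eps ![a,b,c,d,m,n,p] :=
  eps_swap _ _ 0 1 (by decide) (by ext i; fin_cases i <;> rfl)
lemma eps_s1 (a b c d m n p : Fin 7) : eps ![a,c,b,d,m,n,p] = - eps ![a,b,c,d,m,n,p] :=
  eps_swap _ _ 1 2 (by decide) (by ext i; fin_cases i <;> rfl)
lemma eps_s2 (a b c d m n p : Fin 7) : eps ![a,b,d,c,m,n,p] = - eps ![a,b,c,d,m,n,p] :=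
  eps_swap _ _ 2 3 (by decide) (by ext i; fin_cases i <;> rfl)
lemma eps_s4 (a b c d m n p : Fin 7) : eps ![a,b,c,d,n,m,p] = - eps ![a,b,c,d,m,n,p] :=
  eps_swap _ _ 4 5 (by decide) (by ext i; fin_cases i <;> rfl)
lemma eps_s5 (a b c d m n p : Fin 7) : eps ![a,b,c,d,m,p,n] = - eps ![a,b,c,d,m,n,p] :=
  eps_swap _ _ 5 6 (by decide) (by ext i; fin_cases i <;> rfl)

lemma psi_s0 (a b c d : Fin 7) : psi b a c d = - psi a b c d := by
  simp [psi, eps_s0 a b]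
lemma psi_s1 (a b c d : Fin 7) : psi a c b d = - psi a b c d := by
  simp [psi, eps_s1 a b c]
lemma psi_s2 (a b c d : Fin 7) : psi a b d c = - psi a b c d := by
  simp [psi, eps_s2 a b c d]

lemma phi_s0 (a b c : Fin 7) : phi b a c = - phi a b c := by unfold phi; ring
lemma phi_s1 (a b c : Fin 7) : phi a c b = - phi a b c := by unfold phi; ring

lemma psi_eq (a b c d : Fin 7) : psi a b c d =
    eps ![a,b,c,d,0,1,2] + eps ![a,b,c,d,0,3,4] + eps ![a,b,c,d,0,5,6] + eps ![a,b,c,d,1,3,5]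
     - eps ![a,b,c,d,1,4,6] - eps ![a,b,c,d,2,3,6] - eps ![a,b,c,d,2,4,5] := by
  have h : ∀ m n p, eps ![a,b,c,d,m,p,n] = - eps ![a,b,c,d,m,n,p] ∧
      eps ![a,b,c,d,n,m,p] = - eps ![a,b,c,d,m,n,p] ∧ eps ![a,b,c,d,n,p,m] = eps ![a,b,c,d,m,n,p]
      ∧ eps ![a,b,c,d,p,m,n] = eps ![a,b,c,d,m,n,p] ∧ eps ![a,b,c,d,p,n,m] = - eps ![a,b,c,d,m,n,p] := by
    intro m n p
    have h1 := eps_s4 a b c d m n p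
    have h2 := eps_s5 a b c d m n p
    have h3 := eps_s5 a b c d n m p
    have h4 := eps_s4 a b c d m p n
    have h5 := eps_s4 a b c d n p m
    refine ⟨h2, h1, ?_, ?_, ?_⟩ <;> linarith
  obtain ⟨a1,a2,a3,a4,a5⟩ := h 0 1 2
  obtain ⟨b1,b2,b3,b4,b5⟩ := h 0 3 4
  obtain ⟨c1,c2,c3,c4,c5⟩ := h 0 5 6
  obtain ⟨d1,d2,d3,d4,d5⟩ := h 1 3 5
  obtain ⟨e1,e2,e3,e4,e5⟩ := h 1 4 6
  obtain ⟨f1,f2,f3,f4,f5⟩ := h 2 3 6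
  obtain ⟨g1,g2,g3,g4,g5⟩ := h 2 4 5
  unfold psi
  simp only [Fin.sum_univ_seven]
  simp [phi, phi0]
  linarith

def sgZ (a b : Fin 7) : ℤ := if a < b then 1 else if a = b then 0 else -1

def epsZ (v : Fin 7 → Fin 7) : ℤ := ∏ j : Fin 7, ∏ i ∈ Finset.Iio j, sgZ (v i) (v j)

lemma eps_eq (v : Fin 7 → Fin 7) : eps v = (epsZ v : ℝ) := by
  unfold eps epsZ
  split_ifs with h
  · congr 1
    rw [Equiv.Perm.sign_eq_prod_prod_Iio]
    push_cast
    refine Finset.prod_congr rfl fun j _ => Finset.prod_congr rfl fun i hi => ?_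
    have hne : v i ≠ v j := fun e => (Finset.mem_Iio.1 hi).ne (h.1 e)
    simp only [Equiv.ofBijective_apply, sgZ, hne, if_false]
    split_ifs <;> rfl
  · have h1 : ¬ Function.Injective v := fun h' => h (Finite.injective_iff_bijective.1 h')
    simp only [Function.Injective, not_forall] at h1
    obtain ⟨i, j, e, hne⟩ := h1
    rcases lt_or_gt_of_ne hne with hl | hl
    · rw [Finset.prod_eq_zero (Finset.mem_univ j), Int.cast_zero]
      exact Finset.prod_eq_zero (Finset.mem_Iio.2 hl) (by simp [sgZ, e])
    · rw [Finset.prod_eq_zero (Finset.mem_univ i), Int.cast_zero]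
      exact Finset.prod_eq_zero (Finset.mem_Iio.2 hl) (by simp [sgZ, e])

lemma alt_zero (F : Fin 7 → Fin 7 → Fin 7 → Fin 7 → ℝ)
    (h0 : ∀ a b c d, F b a c d = - F a b c d) (h1 : ∀ a b c d, F a c b d = - F a b c d)
    (h2 : ∀ a b c d, F a b d c = - F a b c d)
    (hs : ∀ a b c d, a < b → b < c → c < d → F a b c d = 0) (a b c d : Fin 7) : F a b c d = 0 := by
  have key : ∀ (σ : Equiv.Perm (Fin 4)) (v : Fin 4 → Fin 7),
      F (v (σ 0)) (v (σ 1)) (v (σ 2)) (v (σ 3)) = ((Equiv.Perm.sign σ : ℤ) : ℝ) * F (v 0) (v 1) (v 2) (v 3) := by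
    intro σ
    have hσ : σ ∈ Submonoid.closure (Set.range fun i : Fin 3 => Equiv.swap i.castSucc i.succ) := by
      rw [Equiv.Perm.mclosure_swap_castSucc_succ]; trivial
    induction hσ using Submonoid.closure_induction with
    | one => intro v; simp
    | mem x hx =>
      obtain ⟨i, rfl⟩ := hx
      intro v
      rw [Equiv.Perm.sign_swap (by simp [Fin.ext_iff])]
      fin_cases i
      · simpa [Equiv.swap_apply_def] using h0 (v 0) (v 1) (v 2) (v 3)
      · simpa [Equiv.swap_apply_def] using h1 (v 0) (v 1) (v 2) (v 3)
      · simpa [Equiv.swap_apply_def] using h2 (v 0) (v 1) (v 2) (v 3)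
    | mul x y _ _ hx hy =>
      intro v
      have := hy (v ∘ x)
      simp only [Function.comp] at this
      simp only [Equiv.Perm.mul_apply, this, hx v, Equiv.Perm.sign_mul]
      push_cast; ring
  suffices H : ∀ v : Fin 4 → Fin 7, F (v 0) (v 1) (v 2) (v 3) = 0 from H ![a,b,c,d]
  intro v
  by_cases hv : Function.Injective v
  · have hm : StrictMono (v ∘ Tuple.sort v) :=
      (Tuple.monotone_sort v).strictMono_of_injective (hv.comp (Tuple.sort v).injective)
    have h := key (Tuple.sort v) v
    have h' := hs _ _ _ _ (hm (by decide : (0 : Fin 4) < 1)) (hm (by decide : (1 : Fin 4) < 2)) (hm (by decide : (2 : Fin 4) < 3))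
    simp only [Function.comp] at h'
    rw [h'] at h
    rcases Int.units_eq_one_or (Equiv.Perm.sign (Tuple.sort v)) with e | e <;> rw [e] at h <;> simpa using h.symm
  · simp only [Function.Injective, not_forall] at hv
    obtain ⟨i, j, e, hne⟩ := hv
    have h := key (Equiv.swap i j) v
    have e2 : ∀ k, v (Equiv.swap i j k) = v k := by
      intro k
      rw [Equiv.swap_apply_def]; split_ifs with h1 h2 <;> simp [*]
    rw [Equiv.Perm.sign_swap hne] at h
    simp only [e2] at h
    push_cast at h
    linarith

def phi0Z : ℕ → ℕ → ℕ → ℤ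
  | 0, 1, 2 => 1
  | 0, 3, 4 => 1
  | 0, 5, 6 => 1
  | 1, 3, 5 => 1
  | 1, 4, 6 => -1
  | 2, 3, 6 => -1
  | 2, 4, 5 => -1
  | _, _, _ => 0

lemma phi0_eq (a b c : ℕ) : phi0 a b c = (phi0Z a b c : ℝ) := by
  unfold phi0 phi0Z
  split <;> simp

lemma alt4_s0 (T : Fin 7 → Fin 7 → Fin 7 → Fin 7 → ℝ) (a b c d : Fin 7) :
    alt4 T b a c d = - alt4 T a b c d := by
  rw [alt4_expand, alt4_expand]; ring
lemma alt4_s1 (T : Fin 7 → Fin 7 → Fin 7 → Fin 7 → ℝ) (a b c d : Fin 7) :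
    alt4 T a c b d = - alt4 T a b c d := by
  rw [alt4_expand, alt4_expand]; ring
lemma alt4_s2 (T : Fin 7 → Fin 7 → Fin 7 → Fin 7 → ℝ) (a b c d : Fin 7) :
    alt4 T a b d c = - alt4 T a b c d := by
  rw [alt4_expand, alt4_expand]; ring

lemma alt4_neg (T : Fin 7 → Fin 7 → Fin 7 → Fin 7 → ℝ) (a b c d : Fin 7) :
    alt4 (fun a b c d => - T a b c d) a b c d = - alt4 T a b c d := by
  rw [alt4_expand, alt4_expand]; ring

/-- antisymmetric in the first two slots -/
lemma alt4_two (T : Fin 7 → Fin 7 → Fin 7 → Fin 7 → ℝ)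
    (h0 : ∀ a b c d, T b a c d = - T a b c d) (a b c d : Fin 7) :
    alt4 T a b c d = (1/12) * (
      T a b c d - T a b d c - T a c b d + T a c d b + T a d b c - T a d c b
      + T b c a d - T b c d a - T b d a c + T b d c a + T c d a b - T c d b a) := by
  rw [alt4_expand, h0 a b c d, h0 a b d c, h0 a c b d, h0 a c d b, h0 a d b c, h0 a d c b,
    h0 b c a d, h0 b c d a, h0 b d a c, h0 b d c a, h0 c d a b, h0 c d b a]
  ring

/-- antisymmetric in the first two and in the last two slots -/
lemma alt4_two_two (T : Fin 7 → Fin 7 → Fin 7 → Fin 7 → ℝ)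
    (h0 : ∀ a b c d, T b a c d = - T a b c d) (h2 : ∀ a b c d, T a b d c = - T a b c d)
    (a b c d : Fin 7) :
    alt4 T a b c d = (1/6) * (
      T a b c d - T a c b d + T a d b c + T b c a d - T b d a c + T c d a b) := by
  rw [alt4_two T h0, h2 a b c d, h2 a c b d, h2 a d b c, h2 b c a d, h2 b d a c, h2 c d a b]
  ring

/-- antisymmetric in the first three slots -/
lemma alt4_three (T : Fin 7 → Fin 7 → Fin 7 → Fin 7 → ℝ)
    (h0 : ∀ a b c d, T b a c d = - T a b c d) (h1 : ∀ a b c d, T a c b d = - T a b c d)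
    (a b c d : Fin 7) :
    alt4 T a b c d = (1/4) * (T a b c d - T a b d c + T a c d b - T b c d a) := by
  have h3 : ∀ a b c d, T b c a d = T a b c d := fun a b c d => by
    rw [h1 b a c d, h0 a b c d, neg_neg]
  rw [alt4_two T h0, h1 a b c d, h1 a b d c, h1 a c d b, h3 a b c d, h3 a b d c, h3 a c d b,
    h1 b c d a, h3 b c d a]
  ring

lemma alt4_full (T : Fin 7 → Fin 7 → Fin 7 → Fin 7 → ℝ)
    (h0 : ∀ a b c d, T b a c d = - T a b c d) (h1 : ∀ a b c d, T a c b d = - T a b c d)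
    (h2 : ∀ a b c d, T a b d c = - T a b c d) (a b c d : Fin 7) :
    alt4 T a b c d = T a b c d := by
  rw [alt4_three T h0 h1, h2 a b c d]
  have e1 : T a c d b = T a b c d := by rw [h2 a c b d, h1 a b c d]; ring
  have e2 : T b c d a = - T a b c d := by
    rw [h2 b c a d, h1 b a c d, h0 a b c d]; ring
  rw [e1, e2]; ring

def psiZ (a b c d : Fin 7) : ℤ :=
  epsZ ![a,b,c,d,0,1,2] + epsZ ![a,b,c,d,0,3,4] + epsZ ![a,b,c,d,0,5,6] + epsZ ![a,b,c,d,1,3,5]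
     - epsZ ![a,b,c,d,1,4,6] - epsZ ![a,b,c,d,2,3,6] - epsZ ![a,b,c,d,2,4,5]

lemma psi_cast0 (a b c d : Fin 7) : psi a b c d = (psiZ a b c d : ℝ) := by
  rw [psi_eq]; simp only [eps_eq, psiZ]; push_cast; ring

def phiZ (a b c : Fin 7) : ℤ :=
  phi0Z a.val b.val c.val - phi0Z a.val c.val b.val + phi0Z b.val c.val a.val
    - phi0Z b.val a.val c.val + phi0Z c.val a.val b.val - phi0Z c.val b.val a.val

lemma phi_cast0 (a b c : Fin 7) : phi a b c = (phiZ a b c : ℝ) := by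
  simp only [phi, phi0_eq, phiZ]; push_cast; ring

/-- Values of `φ` (shifted by one), two bits per entry, for fast evaluation. -/
def phiT (a b c : Fin 7) : ℤ :=
  Int.subNatNat (107017740078137563778303625005280651901413321762938078447317986013650337496239065835251873795101497777637913876432571572366743332539595096094464014754256056428264030118507505741721742228603414395146642478421 / 4 ^ (a.val + 7 * b.val + 49 * c.val) % 4) 1

/-- Values of `ψ` (shifted by one), two bits per entry, for fast evaluation. -/
def psiT (a b c d : Fin 7) : ℤ :=
  Int.subNatNat (117197385606384433234377725535744959203059989806659438338450780687739036046925341432839691945290842576623660754497567810821174135914846295060562935277320034411857145340563007879117262151178578324818139660625054672821873625072507325364272737332705751388466440121083214849886956558003015692634512395488164323690608322142676365009740157438434292731787227072211360432322311193553979427775765846709712394956706026730960936645455857406004930531880084478216559093393134325653702027918206868223381573589899622169870400401529328186622950630107415166644142504889625331071325198557356949135185962010624701517456768470452985231854669655812720825844125893753745325287297337411185956398119387352125956348781618516920620588524734331709002701180126231888313643133932809181684721732958928336160105946947652055255301100409071203310210405744469320782083579709168044362851111638206606394144943237227965420865612584633328467574483515052710404352982038883466012451196951971713252902384726163783897231497881323142133392151651745797018241058725058338829459904067210989080706696140469647173266291734492899437867831947618676482158914769534872540406511423643648459174523030542275657383712763788907531998794473227944128569565146235826383715088319455682500905090598097570394902141191418624905280537268141713024006627074876819403108230259110087311112226670894753882012628347736112839931142169892946118974477867962924006944027607199365496703022291913650371619095122637908956501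 / 4 ^ (a.val + 7 * b.val + 49 * c.val + 343 * d.val) % 4) 1

set_option exponentiation.threshold 5000 in
lemma phiT_eq : ∀ a b c, phiZ a b c = phiT a b c := by decide +kernel

set_option exponentiation.threshold 5000 in
lemma psiT_alt : ∀ a b c d, psiT b a c d = - psiT a b c d ∧ psiT a c b d = - psiT a b c d ∧
    psiT a b d c = - psiT a b c d := by decide +kernel

set_option exponentiation.threshold 5000 in
lemma psiT_eq : ∀ a b, a < b → ∀ c, b < c → ∀ d, c < d → psiZ a b c d = psiT a b c d := by
  decide +kernel

lemma phi_cast (a b c : Fin 7) : phi a b c = (phiT a b c : ℝ) := by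
  rw [phi_cast0, phiT_eq]

lemma psi_cast (a b c d : Fin 7) : psi a b c d = (psiT a b c d : ℝ) := by
  rw [← sub_eq_zero]
  revert a b c d
  refine alt_zero _ ?_ ?_ ?_ ?_
  · intro a b c d
    rw [psi_s0 a b, (psiT_alt a b c d).1]; push_cast; ring
  · intro a b c d
    rw [psi_s1 a b, (psiT_alt a b c d).2.1]; push_cast; ring
  · intro a b c d
    rw [psi_s2 a b c d, (psiT_alt a b c d).2.2]; push_cast; ring
  · intro a b c d h1 h2 h3
    rw [psi_cast0, psiT_eq a b h1 c h2 d h3, sub_self]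

/-- `g g g g` over the integers -/
def t1 (a b c d m n p q : Fin 7) : ℤ :=
  if a = m then if b = n then if c = p then if d = q then 1 else 0 else 0 else 0 else 0
/-- `ψ g g` over the integers -/
def t2 (a b c d m n p q : Fin 7) : ℤ :=
  if c = p then if d = q then psiT a b m n else 0 else 0
/-- `φ φ g` over the integers -/
def t3 (a b c d m n p q : Fin 7) : ℤ :=
  if d = q then phiT a b c * phiT m n p else 0

lemma t1_cast (a b c d m n p q : Fin 7) :
    gE a m * gE b n * gE c p * gE d q = (t1 a b c d m n p q : ℝ) := by
  unfold gE t1; split_ifs <;> simp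
lemma t2_cast (a b c d m n p q : Fin 7) :
    psi a b m n * gE c p * gE d q = (t2 a b c d m n p q : ℝ) := by
  unfold gE t2; split_ifs <;> simp [psi_cast]
lemma t3_cast (a b c d m n p q : Fin 7) :
    phi a b c * phi m n p * gE d q = (t3 a b c d m n p q : ℝ) := by
  unfold gE t3; split_ifs <;> simp [phi_cast]

def u1 (a b c d m n p q : Fin 7) : ℤ :=
  let T := t1 a b c d
  T m n p q - T m n q p - T m p n q + T m p q n + T m q n p - T m q p n
  - T n m p q + T n m q p + T n p m q - T n p q m - T n q m p + T n q p m
  + T p m n q - T p m q n - T p n m q + T p n q m + T p q m n - T p q n m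
  - T q m n p + T q m p n + T q n m p - T q n p m - T q p m n + T q p n m

def u2 (a b c d m n p q : Fin 7) : ℤ :=
  let T := t2 a b c d
  T m n p q - T m n q p - T m p n q + T m p q n + T m q n p - T m q p n
  + T n p m q - T n p q m - T n q m p + T n q p m + T p q m n - T p q n m

def u3 (a b c d m n p q : Fin 7) : ℤ :=
  let T := t3 a b c d
  T m n p q - T m n q p + T m p q n - T n p q m

lemma inner1 (a b c d m n p q : Fin 7) :
    alt4 (fun m' n' p' q' => gE a m' * gE b n' * gE c p' * gE d q') m n p q
      = (1/24) * (u1 a b c d m n p q : ℝ) := by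
  rw [alt4_expand]; simp only [t1_cast, u1]; push_cast; ring

lemma inner2 (a b c d m n p q : Fin 7) :
    alt4 (fun m' n' p' q' => psi a b m' n' * gE c p' * gE d q') m n p q
      = (1/12) * (u2 a b c d m n p q : ℝ) := by
  rw [alt4_two _ (fun m n p q => by rw [psi_s2 a b m n]; ring)]
  simp only [t2_cast, u2]; push_cast; ring

lemma inner3 (a b c d m n p q : Fin 7) :
    alt4 (fun m' n' p' q' => phi a b c * phi m' n' p' * gE d q') m n p q
      = (1/4) * (u3 a b c d m n p q : ℝ) := by
  rw [alt4_three _ (fun m n p q => by rw [phi_s0 m n]; ring)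
    (fun m n p q => by rw [phi_s1 m n]; ring)]
  simp only [t3_cast, u3]; push_cast; ring

lemma outer1 (a b c d m n p q : Fin 7) :
    24 * alt4 (fun a' b' c' d' =>
      alt4 (fun m' n' p' q' => gE a' m' * gE b' n' * gE c' p' * gE d' q') m n p q) a b c d
      = (u1 a b c d m n p q : ℝ) := by
  rw [alt4_full]
  · rw [inner1]; ring
  all_goals
    intro a b c d
    simp only [alt4_expand]; ring

lemma outer2 (a b c d m n p q : Fin 7) :
    72 * alt4 (fun a' b' c' d' =>
      alt4 (fun m' n' p' q' => psi a' b' m' n' * gE c' p' * gE d' q') m n p q) a b c d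
      = ((u2 a b c d m n p q - u2 a c b d m n p q + u2 a d b c m n p q + u2 b c a d m n p q
          - u2 b d a c m n p q + u2 c d a b m n p q : ℤ) : ℝ) := by
  rw [alt4_two_two]
  · simp only [inner2]; push_cast; ring
  · intro a b c d
    rw [← alt4_neg]; congr; funext m n p q; rw [psi_s0 a b]; ring
  · intro a b c d
    rw [alt4_two _ (fun m n p q => by rw [psi_s2 a b m n]; ring),
      alt4_two _ (fun m n p q => by rw [psi_s2 a b m n]; ring)]
    ring

lemma outer3 (a b c d m n p q : Fin 7) :
    16 * alt4 (fun a' b' c' d' =>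
      alt4 (fun m' n' p' q' => phi a' b' c' * phi m' n' p' * gE d' q') m n p q) a b c d
      = ((u3 a b c d m n p q - u3 a b d c m n p q + u3 a c d b m n p q - u3 b c d a m n p q : ℤ)
          : ℝ) := by
  rw [alt4_three]
  · simp only [inner3]; push_cast; ring
  · intro a b c d
    rw [← alt4_neg]; congr; funext m n p q; rw [phi_s0 a b]; ring
  · intro a b c d
    rw [← alt4_neg]; congr; funext m n p q; rw [phi_s1 a b]; ring

set_option maxRecDepth 100000 in
set_option exponentiation.threshold 5000 in
set_option synthInstance.maxHeartbeats 400000 in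
set_option synthInstance.maxSize 100000 in
lemma main_check : ∀ a b : Fin 7, a < b → ∀ c, b < c → ∀ d, c < d →
    ∀ m n : Fin 7, m < n → ∀ p, n < p → ∀ q, p < q →
    psiT a b c d * psiT m n p q = u1 a b c d m n p q
      + (u2 a b c d m n p q - u2 a c b d m n p q + u2 a d b c m n p q + u2 b c a d m n p q
          - u2 b d a c m n p q + u2 c d a b m n p q)
      - (u3 a b c d m n p q - u3 a b d c m n p q + u3 a c d b m n p q - u3 b c d a m n p q) := by
  decide +kernel

/-- `ψ_{abcd} ψ^{mnpq} = 24 δ_a^{[m} δ_b^n δ_c^p δ_d^{q]} + 72 ψ_{[ab}{}^{[mn} δ_c^p δ_{d]}^{q]}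
  - 16 φ_{[abc} φ^{[mnp} δ_{d]}^{q]}`, antisymmetrizing separately over the lower
  index group `a,b,c,d` and the upper index group `m,n,p,q`. -/
theorem psi_psi_contraction (a b c d m n p q : Fin 7) :
    psi a b c d * psi m n p q =
      24 * alt4 (fun a' b' c' d' =>
              alt4 (fun m' n' p' q' => gE a' m' * gE b' n' * gE c' p' * gE d' q') m n p q)
            a b c d
      + 72 * alt4 (fun a' b' c' d' =>
              alt4 (fun m' n' p' q' => psi a' b' m' n' * gE c' p' * gE d' q') m n p q)
            a b c d
      - 16 * alt4 (fun a' b' c' d' =>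
              alt4 (fun m' n' p' q' => phi a' b' c' * phi m' n' p' * gE d' q') m n p q)
            a b c d := by
  rw [← sub_eq_zero]
  revert a b c d
  refine alt_zero _ ?_ ?_ ?_ ?_
  · intro a b c d
    rw [psi_s0 a b, alt4_s0 _ a b, alt4_s0 _ a b, alt4_s0 _ a b]; ring
  · intro a b c d
    rw [psi_s1 a b, alt4_s1 _ a b, alt4_s1 _ a b, alt4_s1 _ a b]; ring
  · intro a b c d
    rw [psi_s2 a b c d, alt4_s2 _ a b c d, alt4_s2 _ a b c d, alt4_s2 _ a b c d]; ring
  intro a b c d hab hbc hcd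
  revert m n p q
  refine alt_zero _ ?_ ?_ ?_ ?_
  · intro m n p q
    simp only [psi_s0 m n p q, alt4_s0 _ m n p q, alt4_neg]; ring
  · intro m n p q
    simp only [psi_s1 m n p q, alt4_s1 _ m n p q, alt4_neg]; ring
  · intro m n p q
    simp only [psi_s2 m n p q, alt4_s2 _ m n p q, alt4_neg]; ring
  intro m n p q hmn hnp hpq
  rw [sub_eq_zero, outer1, outer2, outer3, psi_cast, psi_cast]
  exact_mod_cast main_check a b hab c hbc d hcd m n hmn p hnp q hpq
end

section
/- If ω is an antisymmetric 2-tensor on ℝ^7 satisfying ω_{ab} φ^{ab}{}_{c} = 0 for all c (i.e. ω lies in the 14-dimensional component Λ²₁₄), then ω_{ab} ψ^{ab}{}_{cd} = −2 ω_{cd} for all c, d, where ψ is the Hodge dual 4-form of the standard G₂ 3-form φ. -/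
open scoped BigOperators

namespace G2aux

def s (x y : ℕ) : ℤ := bif x == y then 0 else bif x.blt y then 1 else -1

def cp (x : ℕ) : List ℕ → ℤ
  | [] => 1
  | y :: ys => bif x == y then 0 else bif x.blt y then cp x ys else -cp x ys

def ep : List ℕ → ℤ
  | [] => 1
  | x :: xs => cp x xs * ep xs

theorem cp_cons (x y : ℕ) (ys : List ℕ) : cp x (y :: ys) = s x y * cp x ys := by
  rw [cp, s]
  cases x == y <;> cases x.blt y <;> simp

theorem cp_nil (x : ℕ) : cp x [] = 1 := rfl

theorem eps_eq (v : Fin 7 → Fin 7) :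
    eps v = ((∏ i, ∏ j ∈ Finset.Ioi i, s (v i) (v j) : ℤ) : ℝ) := by
  unfold eps
  split_ifs with h
  · congr 1
    rw [Equiv.Perm.sign_eq_prod_prod_Ioi]
    push_cast
    refine Finset.prod_congr rfl fun i _ => Finset.prod_congr rfl fun j hj => ?_
    have hij : i ≠ j := (Finset.mem_Ioi.1 hj).ne
    have hv : (v i : ℕ) ≠ v j := fun e => hij (h.1 (Fin.ext e))
    have hb : ((v i : ℕ) == v j) = false := by simpa using hv
    simp only [s, hb, Equiv.ofBijective_apply, cond_false]
    by_cases hl : v i < v j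
    · have : (v i : ℕ).blt (v j) = true := by simpa [Nat.blt_eq] using hl
      simp [hl, this]
    · have : (v i : ℕ).blt (v j) = false := by
        rw [Bool.eq_false_iff]; simpa [Nat.blt_eq] using hl
      simp [hl, this]
  · rw [← Finite.injective_iff_bijective] at h
    have : ∃ i j, i < j ∧ v i = v j := by
      simp only [Function.Injective, not_forall] at h
      obtain ⟨i, j, e, n⟩ := h
      rcases lt_or_gt_of_ne n with l | l
      · exact ⟨i, j, l, e⟩
      · exact ⟨j, i, l, e.symm⟩
    obtain ⟨i, j, l, e⟩ := this
    symm
    norm_cast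
    refine Finset.prod_eq_zero (Finset.mem_univ i) (Finset.prod_eq_zero (Finset.mem_Ioi.2 l) ?_)
    simp [s, e]

theorem eps_ep (a b c d m n p : Fin 7) :
    eps ![a, b, c, d, m, n, p] = ((ep [a, b, c, d, m, n, p] : ℤ) : ℝ) := by
  rw [eps_eq]
  congr 1
  have h0 : Finset.Ioi (0 : Fin 7) = {1, 2, 3, 4, 5, 6} := by decide
  have h1 : Finset.Ioi (1 : Fin 7) = {2, 3, 4, 5, 6} := by decide
  have h2 : Finset.Ioi (2 : Fin 7) = {3, 4, 5, 6} := by decide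
  have h3 : Finset.Ioi (3 : Fin 7) = {4, 5, 6} := by decide
  have h4 : Finset.Ioi (4 : Fin 7) = {5, 6} := by decide
  have h5 : Finset.Ioi (5 : Fin 7) = {6} := by decide
  have h6 : Finset.Ioi (6 : Fin 7) = ∅ := by decide
  rw [Fin.prod_univ_seven, h0, h1, h2, h3, h4, h5, h6]
  simp [ep, cp_cons, cp_nil, mul_assoc]

theorem eps_comp (v : Fin 7 → Fin 7) (i j : Fin 7) (hij : i ≠ j) :
    eps (v ∘ Equiv.swap i j) = - eps v := by
  unfold eps
  by_cases h : Function.Bijective v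
  · have h' : Function.Bijective (v ∘ Equiv.swap i j) := h.comp (Equiv.bijective _)
    rw [dif_pos h, dif_pos h']
    have : Equiv.ofBijective _ h' = Equiv.ofBijective v h * Equiv.swap i j := by
      ext x; rfl
    rw [this, Equiv.Perm.sign_mul, Equiv.Perm.sign_swap hij]
    simp
  · have h' : ¬ Function.Bijective (v ∘ Equiv.swap i j) := fun h' => h <| by
      have := h'.comp (Equiv.bijective (Equiv.swap i j))
      convert this using 1
      ext x; simp
    rw [dif_neg h, dif_neg h', neg_zero]

def psiZ (a b c d : ℕ) : ℤ :=
  ep [a, b, c, d, 0, 1, 2] + ep [a, b, c, d, 0, 3, 4] + ep [a, b, c, d, 0, 5, 6]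
  + ep [a, b, c, d, 1, 3, 5] - ep [a, b, c, d, 1, 4, 6] - ep [a, b, c, d, 2, 3, 6]
  - ep [a, b, c, d, 2, 4, 5]

theorem sum_phi0 (f : Fin 7 → Fin 7 → Fin 7 → ℝ) :
    ∑ m : Fin 7, ∑ n : Fin 7, ∑ p : Fin 7, f m n p * phi0 m.val n.val p.val =
    f 0 1 2 + f 0 3 4 + f 0 5 6 + f 1 3 5 - f 1 4 6 - f 2 3 6 - f 2 4 5 := by
  simp [Fin.sum_univ_seven, phi0]
  ring

theorem sw1 (g : Fin 7 → Fin 7 → Fin 7 → ℝ) :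
    ∑ m, ∑ n, ∑ p, g m n p = ∑ m, ∑ n, ∑ p, g n m p := Finset.sum_comm

theorem sw2 (g : Fin 7 → Fin 7 → Fin 7 → ℝ) :
    ∑ m, ∑ n, ∑ p, g m n p = ∑ m, ∑ n, ∑ p, g m p n :=
  Finset.sum_congr rfl fun _ _ => Finset.sum_comm

theorem sum_phi (f : Fin 7 → Fin 7 → Fin 7 → ℝ) (h1 : ∀ m n p, f n m p = - f m n p)
    (h2 : ∀ m n p, f m p n = - f m n p) :
    ∑ m : Fin 7, ∑ n : Fin 7, ∑ p : Fin 7, f m n p * phi m n p =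
    6 * (f 0 1 2 + f 0 3 4 + f 0 5 6 + f 1 3 5 - f 1 4 6 - f 2 3 6 - f 2 4 5) := by
  have e1 := sum_phi0 f
  set F : ℝ := ∑ m : Fin 7, ∑ n : Fin 7, ∑ p : Fin 7, f m n p * phi0 m.val n.val p.val with hF
  have a1 : ∀ g : Fin 7 → Fin 7 → Fin 7 → ℝ, ∑ m, ∑ n, ∑ p, f m n p * g n m p
      = - ∑ m, ∑ n, ∑ p, f m n p * g m n p := fun g => by
    rw [sw1]
    simp only [← Finset.sum_neg_distrib]
    refine Finset.sum_congr rfl fun m _ => Finset.sum_congr rfl fun n _ =>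
      Finset.sum_congr rfl fun p _ => ?_
    rw [h1]; ring
  have a2 : ∀ g : Fin 7 → Fin 7 → Fin 7 → ℝ, ∑ m, ∑ n, ∑ p, f m n p * g m p n
      = - ∑ m, ∑ n, ∑ p, f m n p * g m n p := fun g => by
    rw [sw2]
    simp only [← Finset.sum_neg_distrib]
    refine Finset.sum_congr rfl fun m _ => Finset.sum_congr rfl fun n _ =>
      Finset.sum_congr rfl fun p _ => ?_
    rw [h2]; ring
  have b2 := a2 (fun m n p => phi0 m.val n.val p.val)
  have b1 := a1 (fun m n p => phi0 m.val n.val p.val)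
  have b3 := a1 (fun m n p => phi0 m.val p.val n.val)
  have b4 := a2 (fun m n p => phi0 n.val m.val p.val)
  have b5 := a1 (fun m n p => phi0 n.val p.val m.val)
  have b6 := a2 (fun m n p => phi0 n.val p.val m.val)
  simp only [phi, mul_add, mul_sub, Finset.sum_add_distrib, Finset.sum_sub_distrib]
  linarith

theorem psi_psiZ (a b c d : Fin 7) : psi a b c d = ((psiZ a b c d : ℤ) : ℝ) := by
  rw [psi, sum_phi (fun m n p => eps ![a, b, c, d, m, n, p])]
  · simp only [eps_ep, psiZ]
    push_cast
    simp only [show ((0 : Fin 7) : ℕ) = 0 from rfl, show ((1 : Fin 7) : ℕ) = 1 from rfl,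
      show ((2 : Fin 7) : ℕ) = 2 from rfl, show ((3 : Fin 7) : ℕ) = 3 from rfl,
      show ((4 : Fin 7) : ℕ) = 4 from rfl, show ((5 : Fin 7) : ℕ) = 5 from rfl,
      show ((6 : Fin 7) : ℕ) = 6 from rfl]
    ring
  · intro m n p
    rw [← eps_comp _ 4 5 (by decide)]
    congr 1
    ext x; fin_cases x <;> rfl
  · intro m n p
    rw [← eps_comp _ 5 6 (by decide)]
    congr 1
    ext x; fin_cases x <;> rfl

def p0 : ℕ → ℕ → ℕ → ℤ
  | 0, 1, 2 => 1
  | 0, 3, 4 => 1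
  | 0, 5, 6 => 1
  | 1, 3, 5 => 1
  | 1, 4, 6 => -1
  | 2, 3, 6 => -1
  | 2, 4, 5 => -1
  | _, _, _ => 0

theorem phi0_p0 (a b c : ℕ) : phi0 a b c = ((p0 a b c : ℤ) : ℝ) := by
  unfold phi0 p0
  split <;> simp

def pZ (a b c : ℕ) : ℤ := p0 a b c - p0 a c b + p0 b c a - p0 b a c + p0 c a b - p0 c b a

theorem phi_pZ (a b c : Fin 7) : phi a b c = ((pZ a b c : ℤ) : ℝ) := by
  simp [phi, pZ, phi0_p0]

def dl (a b : ℕ) : ℤ := bif a == b then 1 else 0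

set_option maxRecDepth 100000 in
theorem keyZ : ∀ a b c d : Fin 7, psiZ a b c d =
    (pZ a b 0 * pZ c d 0 + pZ a b 1 * pZ c d 1 + pZ a b 2 * pZ c d 2 + pZ a b 3 * pZ c d 3
     + pZ a b 4 * pZ c d 4 + pZ a b 5 * pZ c d 5 + pZ a b 6 * pZ c d 6)
     - dl a c * dl b d + dl a d * dl b c := by
  decide +kernel

theorem dl_eq (a b : Fin 7) : ((dl a b : ℤ) : ℝ) = if a = b then 1 else 0 := by
  by_cases h : a = b
  · simp [dl, h]
  · have : ((a : ℕ) == b) = false := by simpa [Fin.ext_iff] using h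
    simp [dl, h, this]

theorem key (a b c d : Fin 7) : psi a b c d = ∑ e, phi a b e * phi c d e
    - (if a = c then 1 else 0) * (if b = d then 1 else 0)
    + (if a = d then 1 else 0) * (if b = c then 1 else 0) := by
  rw [psi_psiZ, keyZ, Fin.sum_univ_seven]
  simp only [phi_pZ, ← dl_eq]
  push_cast
  rfl

end G2aux

/-- If an antisymmetric 2-tensor `ω` lies in `Λ²₁₄`, i.e. `ω_{ab} φ^{ab}{}_c = 0`,
then `ω_{ab} ψ^{ab}{}_{cd} = -2 ω_{cd}`. -/
theorem lam2_14_psi_contraction (ω : Matrix (Fin 7) (Fin 7) ℝ)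
    (hskew : ∀ a b, ω b a = -ω a b)
    (h14 : ∀ c : Fin 7, ∑ a : Fin 7, ∑ b : Fin 7, ω a b * phi a b c = 0)
    (c d : Fin 7) :
    ∑ a : Fin 7, ∑ b : Fin 7, ω a b * psi a b c d = -2 * ω c d := by
  simp only [G2aux.key, mul_add, mul_sub, Finset.sum_add_distrib, Finset.sum_sub_distrib]
  have h1 : ∑ a : Fin 7, ∑ b : Fin 7, ω a b * ∑ e, phi a b e * phi c d e = 0 := by
    have : ∑ a : Fin 7, ∑ b : Fin 7, ω a b * ∑ e, phi a b e * phi c d e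
        = ∑ e, (∑ a : Fin 7, ∑ b : Fin 7, ω a b * phi a b e) * phi c d e := by
      simp only [Finset.mul_sum, Finset.sum_mul]
      rw [Finset.sum_comm' (t' := Finset.univ) (s' := fun _ => Finset.univ) (by simp)]
      rw [Finset.sum_comm]
      rw [G2aux.sw2, G2aux.sw1]
      refine Finset.sum_congr rfl fun e _ => Finset.sum_congr rfl fun a _ =>
        Finset.sum_congr rfl fun b _ => by ring
    rw [this]
    simp [h14]
  rw [h1]
  simp [hskew c d]
  ring
end

section
/- Let A and B be symmetric positive-definite real 7×7 matrices, and define their G₂ product A ∘ B to be the matrix with entries (A ∘ B)_{ab} = φ_{amn} φ_{bpq} A^{mp} B^{nq}, where φ is the standard G₂ 3-form on ℝ^7. Then A ∘ B is a symmetric positive-definite matrix. -/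
open scoped BigOperators

/-- The G₂ product of two 2-tensors, `(A ∘ B)_{ab} = φ_{amn} φ_{bpq} A^{mp} B^{nq}`. -/
noncomputable def g2prod (A B : Matrix (Fin 7) (Fin 7) ℝ) (a b : Fin 7) : ℝ :=
  ∑ m : Fin 7, ∑ n : Fin 7, ∑ p : Fin 7, ∑ q : Fin 7,
    phi a m n * phi b p q * A m p * B n q

open scoped Kronecker in
lemma kron_pos (A B : Matrix (Fin 7) (Fin 7) ℝ)
    (hAsymm : ∀ a b, A a b = A b a)
    (hApos : ∀ v : Fin 7 → ℝ, v ≠ 0 → 0 < ∑ a : Fin 7, ∑ b : Fin 7, v a * v b * A a b)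
    (hBsymm : ∀ a b, B a b = B b a)
    (hBpos : ∀ v : Fin 7 → ℝ, v ≠ 0 → 0 < ∑ a : Fin 7, ∑ b : Fin 7, v a * v b * B a b)
    (x : Fin 7 × Fin 7 → ℝ) (hx : x ≠ 0) :
    0 < ∑ i, ∑ j, x i * x j * (A i.1 j.1 * B i.2 j.2) := by
  have key : ∀ C : Matrix (Fin 7) (Fin 7) ℝ, (∀ a b, C a b = C b a) →
      (∀ v : Fin 7 → ℝ, v ≠ 0 → 0 < ∑ a : Fin 7, ∑ b : Fin 7, v a * v b * C a b) →
      C.PosDef := by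
    intro C h1 h2
    refine Matrix.PosDef.of_dotProduct_mulVec_pos ?_ ?_
    · ext a b
      simp [Matrix.conjTranspose_apply, h1 b a]
    · intro v hv
      have := h2 v hv
      simp only [dotProduct, Matrix.mulVec, Finset.mul_sum, Pi.star_apply, star_trivial]
      refine this.trans_eq (Finset.sum_congr rfl fun a _ => Finset.sum_congr rfl fun b _ => ?_)
      ring
  have h := ((key A hAsymm hApos).kronecker (key B hBsymm hBpos)).dotProduct_mulVec_pos hx
  simp only [dotProduct, Matrix.mulVec, Finset.mul_sum, Pi.star_apply, star_trivial,
    Matrix.kroneckerMap_apply] at h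
  refine h.trans_eq (Finset.sum_congr rfl fun a _ => Finset.sum_congr rfl fun b _ => ?_)
  ring

lemma sum_swap4 {I K : Type*} [Fintype I] [Fintype K] (f : I → I → K → K → ℝ) :
    ∑ i, ∑ j, ∑ a, ∑ b, f i j a b = ∑ a, ∑ b, ∑ i, ∑ j, f i j a b := by
  have h : ∀ i, ∑ j, ∑ a, ∑ b, f i j a b = ∑ a, ∑ b, ∑ j, f i j a b := fun i => by
    rw [Finset.sum_comm]
    exact Finset.sum_congr rfl fun a _ => Finset.sum_comm
  simp only [h]
  rw [Finset.sum_comm]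
  exact Finset.sum_congr rfl fun a _ => Finset.sum_comm

lemma g2prod_eq (A B : Matrix (Fin 7) (Fin 7) ℝ) (a b : Fin 7) :
    g2prod A B a b = ∑ i : Fin 7 × Fin 7, ∑ j : Fin 7 × Fin 7,
      phi a i.1 i.2 * phi b j.1 j.2 * (A i.1 j.1 * B i.2 j.2) := by
  simp only [g2prod, Fintype.sum_prod_type, mul_assoc]

/-- If `A` and `B` are symmetric positive-definite `7 × 7` matrices, then so is
their G₂ product `A ∘ B`. -/
theorem g2prod_posDef (A B : Matrix (Fin 7) (Fin 7) ℝ)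
    (hAsymm : ∀ a b, A a b = A b a)
    (hApos : ∀ v : Fin 7 → ℝ, v ≠ 0 → 0 < ∑ a : Fin 7, ∑ b : Fin 7, v a * v b * A a b)
    (hBsymm : ∀ a b, B a b = B b a)
    (hBpos : ∀ v : Fin 7 → ℝ, v ≠ 0 → 0 < ∑ a : Fin 7, ∑ b : Fin 7, v a * v b * B a b) :
    (∀ a b, g2prod A B a b = g2prod A B b a) ∧
    (∀ v : Fin 7 → ℝ, v ≠ 0 →
      0 < ∑ a : Fin 7, ∑ b : Fin 7, v a * v b * g2prod A B a b) := by
  constructor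
  · intro a b
    rw [g2prod_eq, g2prod_eq, Finset.sum_comm]
    refine Finset.sum_congr rfl fun i _ => Finset.sum_congr rfl fun j _ => ?_
    rw [hAsymm j.1 i.1, hBsymm j.2 i.2]
    ring
  · intro v hv
    have hx : (fun i : Fin 7 × Fin 7 => ∑ a, v a * phi a i.1 i.2) ≠ 0 := by
      intro h
      apply hv
      have h' : ∀ m n, ∑ a, v a * phi a m n = 0 := fun m n => congrFun h (m, n)
      have h0 := h' 1 2
      have h1 := h' 2 0
      have h2 := h' 0 1
      have h3 := h' 4 0
      have h4 := h' 0 3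
      have h5 := h' 6 0
      have h6 := h' 0 5
      simp [Fin.sum_univ_succ, phi, phi0] at h0 h1 h2 h3 h4 h5 h6
      funext a
      fin_cases a <;> simp <;> assumption
    refine (kron_pos A B hAsymm hApos hBsymm hBpos _ hx).trans_eq ?_
    simp only [g2prod_eq, Finset.mul_sum, Finset.sum_mul]
    rw [sum_swap4]
    rw [Finset.sum_comm]
    exact Finset.sum_congr rfl fun a _ => Finset.sum_congr rfl fun b _ =>
      Finset.sum_congr rfl fun i _ => Finset.sum_congr rfl fun j _ => by ring
end

section
/- For all vectors ξ, X ∈ ℝ^7 and every symmetric 2-tensor h on ℝ^7, define the symmetric 2-tensor ω_{ab} = ξ_{m} φ^{mn}{}_{(a} h_{b)n} + (1/2) ξ_{(a} X_{b)}. Then the following algebraic identity holds: 2|ξ|²|X|² + 2⟨ξ,X⟩² + ξ_{m} ξ^{n} h_{np} φ^{mp}{}_{a} X^{a} + |ξ|²|h|² − ξ^{d} ξ^{a} h_{ae} h_{d}{}^{e} − ξ_{b} ξ_{m} h_{cn} h_{dp} φ^{bcd} φ^{mnp} = (7/4)( |ξ|²|X|² + ⟨ξ,X⟩² ) + 2 ω_{ab}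 ω^{ab}. In particular the left-hand side is nonnegative. (This is the key algebraic identity showing that the principal symbol of the modified Laplacian coflow operator pairs nonnegatively with closed forms, i.e. the weak parabolicity computation in Theorem 5.1 of the paper.) -/
open scoped BigOperators

/-- The symmetric 2-tensor `ω_{ab} = ξ_m φ^{mn}{}_{(a} h_{b)n} + (1/2) ξ_{(a} X_{b)}`. -/
noncomputable def omegaSym (ξ X : Fin 7 → ℝ) (h : Matrix (Fin 7) (Fin 7) ℝ)
    (a b : Fin 7) : ℝ :=
  (1 / 2 : ℝ) * ((∑ m : Fin 7, ∑ n : Fin 7, ξ m * phi m n a * h b n)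
      + (∑ m : Fin 7, ∑ n : Fin 7, ξ m * phi m n b * h a n))
    + (1 / 2 : ℝ) * ((1 / 2 : ℝ) * (ξ a * X b + ξ b * X a))


noncomputable def AA (ξ : Fin 7 → ℝ) (n a : Fin 7) : ℝ := ∑ m : Fin 7, ξ m * phi m n a

def AM (ξ : Fin 7 → ℝ) : Fin 7 → Fin 7 → ℝ :=
  ![![0, ξ 2, -ξ 1, ξ 4, -ξ 3, ξ 6, -ξ 5],
    ![-ξ 2, 0, ξ 0, ξ 5, -ξ 6, -ξ 3, ξ 4],
    ![ξ 1, -ξ 0, 0, -ξ 6, -ξ 5, ξ 4, ξ 3],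
    ![-ξ 4, -ξ 5, ξ 6, 0, ξ 0, ξ 1, -ξ 2],
    ![ξ 3, ξ 6, ξ 5, -ξ 0, 0, -ξ 2, -ξ 1],
    ![-ξ 6, ξ 3, -ξ 4, -ξ 1, ξ 2, 0, ξ 0],
    ![ξ 5, -ξ 4, -ξ 3, ξ 2, ξ 1, -ξ 0, 0]]

set_option maxHeartbeats 2000000 in
lemma AA_val (ξ : Fin 7 → ℝ) (n a : Fin 7) : AA ξ n a = AM ξ n a := by
  simp only [AA, phi, Fin.sum_univ_seven]
  fin_cases n <;> fin_cases a <;> simp [phi0, AM]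

set_option maxHeartbeats 2000000 in
lemma AA_AAt (ξ : Fin 7 → ℝ) (n k : Fin 7) :
    ∑ b, AA ξ n b * AA ξ k b = (if n = k then ∑ a, ξ a * ξ a else 0) - ξ n * ξ k := by
  simp only [AA_val, Fin.sum_univ_seven]
  fin_cases n <;> fin_cases k <;> simp [AM] <;> ring

lemma AA_anti (ξ : Fin 7 → ℝ) (n k : Fin 7) : AA ξ n k = - AA ξ k n := by
  simp only [AA, phi, ← Finset.sum_neg_distrib]
  exact Finset.sum_congr rfl fun _ _ => by ring

lemma AA_xi (ξ : Fin 7 → ℝ) (n : Fin 7) : ∑ a, AA ξ n a * ξ a = 0 := by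
  simp only [AA_val, Fin.sum_univ_seven]
  fin_cases n <;> simp [AM] <;> ring

noncomputable def PP (ξ : Fin 7 → ℝ) (h : Matrix (Fin 7) (Fin 7) ℝ) (b a : Fin 7) : ℝ :=
  ∑ n, h b n * AA ξ n a

lemma omega_eq (ξ X : Fin 7 → ℝ) (h : Matrix (Fin 7) (Fin 7) ℝ) (a b : Fin 7) :
    omegaSym ξ X h a b = 1 / 2 * (PP ξ h b a + PP ξ h a b) + 1 / 4 * (ξ a * X b + ξ b * X a) := by
  have key : ∀ a b, (∑ m : Fin 7, ∑ n : Fin 7, ξ m * phi m n a * h b n) = PP ξ h b a := by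
    intro a b
    rw [Finset.sum_comm]
    simp only [PP, AA, Finset.mul_sum]
    exact Finset.sum_congr rfl fun _ _ => Finset.sum_congr rfl fun _ _ => by ring
  rw [omegaSym, key, key]; ring

lemma sq_expand (ξ X : Fin 7 → ℝ) (P : Fin 7 → Fin 7 → ℝ) :
    2 * ∑ a, ∑ b, (1 / 2 * (P b a + P a b) + 1 / 4 * (ξ a * X b + ξ b * X a))
        * (1 / 2 * (P b a + P a b) + 1 / 4 * (ξ a * X b + ξ b * X a))
      = (∑ a, ∑ b, P a b * P a b) + (∑ a, ∑ b, P a b * P b a)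
        + (∑ a, ∑ b, ξ a * P a b * X b) + (∑ a, X a * ∑ b, P a b * ξ b)
        + 1 / 4 * ((∑ a, ξ a * ξ a) * (∑ a, X a * X a) + (∑ a, ξ a * X a) ^ 2) := by
  simp only [Fin.sum_univ_succ, Fin.sum_univ_zero]
  ring

lemma PP_xi (ξ : Fin 7 → ℝ) (h : Matrix (Fin 7) (Fin 7) ℝ) (a : Fin 7) :
    ∑ b, PP ξ h a b * ξ b = 0 := by
  simp only [PP, Finset.sum_mul]
  rw [Finset.sum_comm]
  simp only [mul_assoc, ← Finset.mul_sum, AA_xi, mul_zero, Finset.sum_const_zero]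

lemma PP_sq (ξ : Fin 7 → ℝ) (h : Matrix (Fin 7) (Fin 7) ℝ) (hsymm : ∀ a b, h a b = h b a) :
    (∑ a, ∑ b, PP ξ h a b * PP ξ h a b) =
      (∑ a : Fin 7, ξ a * ξ a) * (∑ a : Fin 7, ∑ b : Fin 7, h a b * h a b)
        - (∑ d : Fin 7, ∑ a : Fin 7, ∑ e : Fin 7, ξ d * ξ a * h a e * h d e) := by
  have h1 : ∀ a, ∑ b, PP ξ h a b * PP ξ h a b
      = ∑ n, ∑ k, h a n * h a k * ∑ b, AA ξ n b * AA ξ k b := by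
    intro a
    simp only [PP, Finset.sum_mul_sum]
    simp only [Finset.mul_sum]
    rw [Finset.sum_comm]
    refine Finset.sum_congr rfl fun _ _ => ?_
    rw [Finset.sum_comm]
    exact Finset.sum_congr rfl fun _ _ => Finset.sum_congr rfl fun _ _ => by ring
  have h2 : (∑ d : Fin 7, ∑ a : Fin 7, ∑ e : Fin 7, ξ d * ξ a * h a e * h d e)
      = ∑ e, ∑ n, ∑ k, h e n * h e k * (ξ n * ξ k) := by
    have h3 : (∑ d : Fin 7, ∑ a : Fin 7, ∑ e : Fin 7, ξ d * ξ a * h a e * h d e)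
        = ∑ d : Fin 7, ∑ e : Fin 7, ∑ a : Fin 7, ξ d * ξ a * h a e * h d e :=
      Finset.sum_congr rfl fun d _ => Finset.sum_comm
    rw [h3, Finset.sum_comm]
    refine Finset.sum_congr rfl fun x _ => Finset.sum_congr rfl fun y _ =>
      Finset.sum_congr rfl fun z _ => ?_
    rw [hsymm x y, hsymm x z]; ring
  rw [h2, Finset.mul_sum, ← Finset.sum_sub_distrib]
  refine Finset.sum_congr rfl fun a _ => ?_
  rw [h1]
  simp only [AA_AAt, mul_sub, Finset.sum_sub_distrib]
  congr 1
  simp only [mul_ite, mul_zero, Finset.sum_ite_eq, Finset.mem_univ, if_true]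
  rw [Finset.mul_sum]
  exact Finset.sum_congr rfl fun _ _ => by ring

lemma T3 (ξ X : Fin 7 → ℝ) (h : Matrix (Fin 7) (Fin 7) ℝ) :
    (∑ m : Fin 7, ∑ n : Fin 7, ∑ p : Fin 7, ∑ a : Fin 7,
            ξ m * ξ n * h n p * phi m p a * X a) = ∑ a, ∑ b, ξ a * PP ξ h a b * X b := by
  simp only [PP, AA, Finset.mul_sum, Finset.sum_mul]
  rw [Finset.sum_comm]
  refine Finset.sum_congr rfl fun n _ => ?_
  rw [Finset.sum_comm]
  rw [Finset.sum_comm (s := Finset.univ (α := Fin 7)) (t := Finset.univ (α := Fin 7))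
    (f := fun b p => ∑ m, ξ n * (h n p * (ξ m * phi m p b)) * X b)]
  refine Finset.sum_congr rfl fun p _ => ?_
  rw [Finset.sum_comm]
  exact Finset.sum_congr rfl fun _ _ => Finset.sum_congr rfl fun _ _ => by ring

lemma swap5 (G : Fin 7 → Fin 7 → Fin 7 → Fin 7 → Fin 7 → ℝ) :
    ∑ b, ∑ c, ∑ n, ∑ d, ∑ p, G b c n d p = ∑ c, ∑ n, ∑ d, ∑ p, ∑ b, G b c n d p := by
  rw [Finset.sum_comm]
  refine Finset.sum_congr rfl fun _ _ => ?_
  rw [Finset.sum_comm]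
  refine Finset.sum_congr rfl fun _ _ => ?_
  rw [Finset.sum_comm]
  refine Finset.sum_congr rfl fun _ _ => ?_
  rw [Finset.sum_comm]

lemma swap6 (F : Fin 7 → Fin 7 → Fin 7 → Fin 7 → Fin 7 → Fin 7 → ℝ) :
    ∑ b, ∑ m, ∑ c, ∑ n, ∑ d, ∑ p, F b m c n d p
      = ∑ c, ∑ n, ∑ d, ∑ p, ∑ b, ∑ m, F b m c n d p := by
  rw [← swap5 (fun b c n d p => ∑ m, F b m c n d p)]
  exact Finset.sum_congr rfl fun b _ => swap5 (F b)

lemma T6 (ξ : Fin 7 → ℝ) (h : Matrix (Fin 7) (Fin 7) ℝ) (hsymm : ∀ a b, h a b = h b a) :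
    (∑ b : Fin 7, ∑ m : Fin 7, ∑ c : Fin 7, ∑ n : Fin 7, ∑ d : Fin 7, ∑ p : Fin 7,
            ξ b * ξ m * h c n * h d p * phi b c d * phi m n p)
      = - ∑ a, ∑ b, PP ξ h a b * PP ξ h b a := by
  have h1 : (∑ b : Fin 7, ∑ m : Fin 7, ∑ c : Fin 7, ∑ n : Fin 7, ∑ d : Fin 7, ∑ p : Fin 7,
            ξ b * ξ m * h c n * h d p * phi b c d * phi m n p)
      = ∑ c, ∑ n, ∑ d, ∑ p, h c n * h d p * (AA ξ c d * AA ξ n p) := by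
    simp only [AA, Finset.sum_mul_sum]
    simp only [Finset.mul_sum]
    rw [swap6]
    refine Finset.sum_congr rfl fun _ _ => Finset.sum_congr rfl fun _ _ =>
      Finset.sum_congr rfl fun _ _ => Finset.sum_congr rfl fun _ _ =>
      Finset.sum_congr rfl fun _ _ => Finset.sum_congr rfl fun _ _ => ?_
    ring
  have h2 : (∑ a, ∑ b, PP ξ h a b * PP ξ h b a)
      = ∑ a, ∑ b, ∑ n, ∑ k, h a n * AA ξ n b * (h b k * AA ξ k a) := by
    simp only [PP, Finset.sum_mul_sum]
  rw [h1, h2]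
  simp only [← Finset.sum_neg_distrib]
  -- a = n', n = c, b = d, k = p
  rw [Finset.sum_comm]
  refine Finset.sum_congr rfl fun a _ => ?_
  rw [Finset.sum_comm]
  refine Finset.sum_congr rfl fun b _ => ?_
  refine Finset.sum_congr rfl fun n _ => Finset.sum_congr rfl fun k _ => ?_
  rw [AA_anti ξ a k, hsymm n a]; ring

/-- The key algebraic identity behind the weak parabolicity of the modified
Laplacian coflow: for all `ξ, X ∈ ℝ⁷` and every symmetric 2-tensor `h`,
`2|ξ|²|X|² + 2⟨ξ,X⟩² + ξ_m ξ^n h_{np} φ^{mp}{}_a X^a + |ξ|²|h|²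
  - ξ^d ξ^a h_{ae} h_d{}^e - ξ_b ξ_m h_{cn} h_{dp} φ^{bcd} φ^{mnp}
  = (7/4)(|ξ|²|X|² + ⟨ξ,X⟩²) + 2 ω_{ab} ω^{ab} ≥ 0`. -/
theorem weak_parabolicity_identity (ξ X : Fin 7 → ℝ) (h : Matrix (Fin 7) (Fin 7) ℝ)
    (hsymm : ∀ a b, h a b = h b a) :
    (2 * (∑ a : Fin 7, ξ a * ξ a) * (∑ a : Fin 7, X a * X a)
        + 2 * (∑ a : Fin 7, ξ a * X a) ^ 2
        + (∑ m : Fin 7, ∑ n : Fin 7, ∑ p : Fin 7, ∑ a : Fin 7,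
            ξ m * ξ n * h n p * phi m p a * X a)
        + (∑ a : Fin 7, ξ a * ξ a) * (∑ a : Fin 7, ∑ b : Fin 7, h a b * h a b)
        - (∑ d : Fin 7, ∑ a : Fin 7, ∑ e : Fin 7, ξ d * ξ a * h a e * h d e)
        - (∑ b : Fin 7, ∑ m : Fin 7, ∑ c : Fin 7, ∑ n : Fin 7, ∑ d : Fin 7, ∑ p : Fin 7,
            ξ b * ξ m * h c n * h d p * phi b c d * phi m n p)
      = (7 / 4 : ℝ) * ((∑ a : Fin 7, ξ a * ξ a) * (∑ a : Fin 7, X a * X a)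
          + (∑ a : Fin 7, ξ a * X a) ^ 2)
        + 2 * ∑ a : Fin 7, ∑ b : Fin 7, omegaSym ξ X h a b * omegaSym ξ X h a b) ∧
    0 ≤ 2 * (∑ a : Fin 7, ξ a * ξ a) * (∑ a : Fin 7, X a * X a)
        + 2 * (∑ a : Fin 7, ξ a * X a) ^ 2
        + (∑ m : Fin 7, ∑ n : Fin 7, ∑ p : Fin 7, ∑ a : Fin 7,
            ξ m * ξ n * h n p * phi m p a * X a)
        + (∑ a : Fin 7, ξ a * ξ a) * (∑ a : Fin 7, ∑ b : Fin 7, h a b * h a b)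
        - (∑ d : Fin 7, ∑ a : Fin 7, ∑ e : Fin 7, ξ d * ξ a * h a e * h d e)
        - (∑ b : Fin 7, ∑ m : Fin 7, ∑ c : Fin 7, ∑ n : Fin 7, ∑ d : Fin 7, ∑ p : Fin 7,
            ξ b * ξ m * h c n * h d p * phi b c d * phi m n p) := by
  have key := sq_expand ξ X (PP ξ h)
  simp only [PP_xi, mul_zero, Finset.sum_const_zero, PP_sq ξ h hsymm] at key
  refine and_iff_left_of_imp ?_ |>.mpr ?_
  · intro H
    rw [H]
    have a1 : 0 ≤ ∑ a : Fin 7, ξ a * ξ a := Finset.sum_nonneg fun _ _ => mul_self_nonneg _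
    have a2 : 0 ≤ ∑ a : Fin 7, X a * X a := Finset.sum_nonneg fun _ _ => mul_self_nonneg _
    have a3 : 0 ≤ ∑ a : Fin 7, ∑ b : Fin 7, omegaSym ξ X h a b * omegaSym ξ X h a b :=
      Finset.sum_nonneg fun _ _ => Finset.sum_nonneg fun _ _ => mul_self_nonneg _
    positivity
  · simp only [omega_eq]
    rw [key, T3, T6 ξ h hsymm]
    ring
end
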